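/- Let D be a reduced real plane curve with a real node z that is an isolated point of the real point set of D. If the two local branches of D at z belong to two distinct irreducible components D₁ and D₂ of the complexification of D, then D₂ is the complex conjugate of D₁; in particular, z cannot be an isolated node lying at the intersection of two distinct real components. -/

import Mathlib

/-!
Write `𝔪` for the maximal ideal of `ℂ[[t₀,t₁]]`. If the local equation `f` of the curve at `z` lies
in `𝔪³`, both its partial derivatives lie in `𝔪²`, so the Milnor algebra has dimension at least two
or infinite dimension (`finrank` is `0` then). Hence `f ∉ 𝔪³` at a node (`milnor_ne_one`). This has
two consequences for the factors of the complexified polynomial: three of them whose product divides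
it cannot all vanish at `z` (`not_dvd_three`), and if the product of two vanishing at `z` divides it,
each is smooth at `z` (`not_dvd_of_singular`).

Let `G` be the conjugate of `F₁`. It divides the complexified polynomial, as that polynomial is real,
and it vanishes at `z`, as `z` is real; the latter uses that factors of a homogeneous polynomial are
homogeneous, because values at the complex representative of `z` are compared with values at a real
one. If `G` were associated to neither `F₁` nor `F₂`, the product `F₁ F₂ G` would divide the
polynomial, against the first consequence. If `G` were associated to `F₁`, then `F₁` would be a
multiple of a real polynomial `R` (`exists_real_of_associated_conj`), and by the second consequence
`R` would have nonzero gradient at `z`. Then `R` changes sign across `z`, and the intermediate value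
theorem on parallel segments yields real zeros of `R` arbitrarily near `z` and different from it
(`exists_zero_near`), so `z` would not be isolated. The same argument rules out every real component
through `z`, which is the second claim.
-/

/-!
Common setup: the real projective plane, real algebraic plane curves,
ovals, and the arrangement `B₂(1,4,5)` of an M-sextic and a line.
-/

open MvPolynomial Set Topology

noncomputable section

/-- The real projective plane `ℝP²`. -/
abbrev RP2 : Type := Projectivization ℝ (Fin 3 → ℝ)

/-- The complex projective plane `ℂP²`. -/
abbrev CP2 : Type := Projectivization ℂ (Fin 3 → ℂ)

instance : TopologicalSpace RP2 :=
  inferInstanceAs (TopologicalSpace (Quotient (projectivizationSetoid ℝ (Fin 3 → ℝ))))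

instance : TopologicalSpace CP2 :=
  inferInstanceAs (TopologicalSpace (Quotient (projectivizationSetoid ℂ (Fin 3 → ℂ))))

/-- The set of real points in `ℝP²` of a real homogeneous polynomial `P`. -/
def zeroSet (P : MvPolynomial (Fin 3) ℝ) : Set RP2 := {x | eval x.rep P = 0}

/-- The complexification of a real polynomial. -/
def cx (P : MvPolynomial (Fin 3) ℝ) : MvPolynomial (Fin 3) ℂ := P.map (algebraMap ℝ ℂ)

/-- The canonical inclusion `ℝP² → ℂP²`. -/
def toC (x : RP2) : CP2 :=
  Projectivization.mk ℂ (fun i => (x.rep i : ℂ)) (by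
    intro h
    apply x.rep_nonzero
    funext i
    have := congrFun h i
    simpa using this)

/-- The gradient of a real polynomial at a point of `ℝ³`. -/
def grad (P : MvPolynomial (Fin 3) ℝ) (v : Fin 3 → ℝ) : Fin 3 → ℝ :=
  fun i => eval v (pderiv i P)

/-- `y` is a singular point of the complex projective curve `F = 0`. -/
def IsSingularPointC (F : MvPolynomial (Fin 3) ℂ) (y : CP2) : Prop :=
  eval y.rep F = 0 ∧ ∀ i, eval y.rep (pderiv i F) = 0

/-- A smooth (nonsingular over `ℂ`) real sextic curve. -/
structure IsSmoothSextic (P : MvPolynomial (Fin 3) ℝ) : Prop where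
  homog : P.IsHomogeneous 6
  ne_zero : P ≠ 0
  smooth : ∀ y : CP2, ¬ IsSingularPointC (cx P) y

/-- A real line (a nonzero homogeneous linear form). -/
structure IsLine (L : MvPolynomial (Fin 3) ℝ) : Prop where
  homog : L.IsHomogeneous 1
  ne_zero : L ≠ 0

/-- `T` is a connected component of the subspace `S`. -/
def IsComponentIn (S T : Set RP2) : Prop := ∃ x ∈ S, T = connectedComponentIn S x

/-- An oval of (the real point set of) a curve: a connected component of it. -/
def IsOval (C O : Set RP2) : Prop := IsComponentIn C O

/-- The oval `O` bounds the open disk `D`:  `D` is a connected component of the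
complement of `O` which is simply connected (in `ℝP²` this singles out the disk
component as opposed to the Möbius-band component). -/
def BoundsDisk (O D : Set RP2) : Prop :=
  IsComponentIn Oᶜ D ∧ SimplyConnectedSpace D

/-- An empty oval of the curve `C`: an oval whose interior disk contains no other
point of the curve. -/
def IsEmptyOval (C O : Set RP2) : Prop :=
  IsOval C O ∧ ∃ D, BoundsDisk O D ∧ D ∩ C = ∅

/-- Transversality of the curves `P = 0` and `Q = 0` at a real point `x`
(the gradients are linearly independent). -/
def TransverseAt (P Q : MvPolynomial (Fin 3) ℝ) (x : RP2) : Prop :=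
  LinearIndependent ℝ ![grad P x.rep, grad Q x.rep]

/-- The arrangement `B₂(1,4,5)` of a smooth real `M`-sextic `P = 0` and a real
line `L = 0` in `ℝP²`:  exactly one oval `Oⁿᵉ` of the sextic meets the line,
transversally at `6` points, which cut `Oⁿᵉ` into six consecutive arcs
`a 0, …, a 5` (these are `a₁, …, a₆`); `d₀` is the open disk bounded by `Oⁿᵉ`;
`d₁` and `d₂` are two of the connected components of `d₀ \ L`, where `d₁`
contains exactly one empty oval `Oᵉ` of the sextic and `d₂` (whose boundary
contains the arc `a₅ = a 4`) contains exactly four empty ovals; the remaining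
five empty ovals lie in a connected component `d₃` of `ℝP² \ (Oⁿᵉ ∪ L)`
disjoint from `d₀`; no other component of the complement contains ovals. -/
structure B2145 (P L : MvPolynomial (Fin 3) ℝ) where
  smoothP : IsSmoothSextic P
  lineL : IsLine L
  /-- the non-empty oval -/
  One : Set RP2
  /-- the empty oval inside `d₁` -/
  Oe : Set RP2
  d0 : Set RP2
  d1 : Set RP2
  d2 : Set RP2
  d3 : Set RP2
  /-- the six arcs `a₁,…,a₆` -/
  a : Fin 6 → Set RP2
  /-- the sextic is an M-sextic: it has `11` ovals -/
  Msextic : {O : Set RP2 | IsOval (zeroSet P) O}.ncard = 11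
  One_oval : IsOval (zeroSet P) One
  Oe_oval : IsOval (zeroSet P) Oe
  /-- the line meets the sextic at exactly six points … -/
  inter_card : (zeroSet P ∩ zeroSet L).ncard = 6
  /-- … all of which lie on the oval `Oⁿᵉ` (so no other oval meets the line) … -/
  inter_sub_One : zeroSet P ∩ zeroSet L ⊆ One
  /-- … and all intersections are transversal -/
  transverse : ∀ x ∈ zeroSet P ∩ zeroSet L, TransverseAt P L x
  /-- `d₀` is the open disk bounded by `Oⁿᵉ` -/
  d0_disk : BoundsDisk One d0
  /-- `d₁`, `d₂` are connected components of `d₀ \ L` -/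
  d1_comp : IsComponentIn (d0 \ zeroSet L) d1
  d2_comp : IsComponentIn (d0 \ zeroSet L) d2
  d1_ne_d2 : d1 ≠ d2
  /-- the arcs are the connected components of `Oⁿᵉ \ L` … -/
  arcs_comp : ∀ i, IsComponentIn (One \ zeroSet L) (a i)
  arcs_inj : Function.Injective a
  arcs_cover : One \ zeroSet L ⊆ ⋃ i, a i
  /-- … numbered consecutively around the oval -/
  arcs_consec : ∀ i : Fin 6, (closure (a i) ∩ closure (a (i + 1))).Nonempty
  /-- the boundary of `d₂` contains the arc `a₅` -/
  a5_bd_d2 : a 4 ⊆ closure d2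
  Oe_sub_d1 : Oe ⊆ d1
  /-- `d₁` contains exactly one empty oval (namely `Oᵉ`) -/
  count_d1 : {O : Set RP2 | IsEmptyOval (zeroSet P) O ∧ O ⊆ d1}.ncard = 1
  /-- `d₂` contains exactly four empty ovals -/
  count_d2 : {O : Set RP2 | IsEmptyOval (zeroSet P) O ∧ O ⊆ d2}.ncard = 4
  /-- `d₃` is a connected component of `ℝP² \ (Oⁿᵉ ∪ L)` disjoint from `d₀` -/
  d3_comp : IsComponentIn (One ∪ zeroSet L)ᶜ d3
  d3_disj_d0 : Disjoint d3 d0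
  /-- `d₃` contains exactly five empty ovals -/
  count_d3 : {O : Set RP2 | IsEmptyOval (zeroSet P) O ∧ O ⊆ d3}.ncard = 5
  /-- every oval other than `Oⁿᵉ` lies in `d₁`, `d₂` or `d₃` (all other
  components of the complement contain no ovals) -/
  ovals_loc : ∀ O : Set RP2, IsOval (zeroSet P) O → O ≠ One →
    O ⊆ d1 ∨ O ⊆ d2 ∨ O ⊆ d3

end

/-!
Singular points, nodes and `A₃`-points of plane curves, via Milnor numbers
computed in formal power series in a local affine chart.
-/

noncomputable section

/-- The dehomogenization of `F` in the affine chart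
`(t₀, t₁) ↦ [v + t₀ • e₁ + t₁ • e₂]` of `ℂP²` centered at `[v]`. -/
def localize (F : MvPolynomial (Fin 3) ℂ) (v e₁ e₂ : Fin 3 → ℂ) :
    MvPolynomial (Fin 2) ℂ :=
  eval₂ (C : ℂ →+* MvPolynomial (Fin 2) ℂ)
    (fun i => C (v i) + C (e₁ i) * X 0 + C (e₂ i) * X 1) F

/-- The Milnor number of a plane curve germ at the origin: the dimension of the
Milnor algebra `ℂ[[t₀,t₁]] / (∂f/∂t₀, ∂f/∂t₁)`. -/
def milnor (f : MvPolynomial (Fin 2) ℂ) : ℕ :=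
  Module.finrank ℂ
    (MvPowerSeries (Fin 2) ℂ ⧸
      Ideal.span {(↑(pderiv 0 f) : MvPowerSeries (Fin 2) ℂ),
                  (↑(pderiv 1 f) : MvPowerSeries (Fin 2) ℂ)})

/-- The complex curve `F = 0` has at `y` a singular point of Milnor number `μ`.
(`μ = 1` is a node `A₁`; `μ = 3` is an `A₃`-singularity: for plane curve germs,
Milnor number `3` forces corank `1`, hence type `A₃`.) -/
def HasSingOfMilnor (F : MvPolynomial (Fin 3) ℂ) (y : CP2) (μ : ℕ) : Prop :=
  IsSingularPointC F y ∧
  ∃ e₁ e₂ : Fin 3 → ℂ, LinearIndependent ℂ ![y.rep, e₁, e₂] ∧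
    milnor (localize F y.rep e₁ e₂) = μ

/-- `y` is a node (an `A₁`-singularity) of the complex curve `F = 0`. -/
def IsNodeC (F : MvPolynomial (Fin 3) ℂ) (y : CP2) : Prop := HasSingOfMilnor F y 1

/-- `x` is a real node of the real curve `P = 0`. -/
def IsRealNode (P : MvPolynomial (Fin 3) ℝ) (x : RP2) : Prop := IsNodeC (cx P) (toC x)

/-- `x` is an `A₃`-singularity (a real point) of the real curve `P = 0`. -/
def IsRealA3 (P : MvPolynomial (Fin 3) ℝ) (x : RP2) : Prop :=
  HasSingOfMilnor (cx P) (toC x) 3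

/-- `x` is an isolated point of the set `S ⊆ ℝP²`.  An isolated real node is a
real node which is an isolated point of the real point set (its two local
branches are complex conjugate); a non-isolated node is a crossing point of two
real branches. -/
def IsIsolatedRealPoint (S : Set RP2) (x : RP2) : Prop :=
  x ∈ S ∧ ∃ U ∈ nhds x, S ∩ U = {x}

end


namespace IsolatedNode

/-! ### Germs in the affine chart and their multiplicity -/

theorem localize_mul (F G : MvPolynomial (Fin 3) ℂ) (v e₁ e₂ : Fin 3 → ℂ) :
    localize (F * G) v e₁ e₂ = localize F v e₁ e₂ * localize G v e₁ e₂ := by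
  simp [localize, eval₂_mul]

theorem constantCoeff_localize (F : MvPolynomial (Fin 3) ℂ) (v e₁ e₂ : Fin 3 → ℂ) :
    constantCoeff (localize F v e₁ e₂) = eval v F := by
  induction F using MvPolynomial.induction_on with
  | C a => simp [localize]
  | add p q hp hq => simp_all [localize, eval₂_add]
  | mul_X p i hp => simp_all [localize, eval₂_mul]

/-- The chain rule for the affine chart, at the origin. -/
theorem constantCoeff_pderiv_localize (F : MvPolynomial (Fin 3) ℂ) (v e₁ e₂ : Fin 3 → ℂ)
    (i : Fin 2) :
    constantCoeff (pderiv i (localize F v e₁ e₂)) =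
      ∑ k, eval v (pderiv k F) * (![e₁, e₂] i) k := by
  induction F using MvPolynomial.induction_on with
  | C a => simp [localize]
  | add p q hp hq =>
    simp only [localize, eval₂_add, map_add] at *
    rw [hp, hq, ← Finset.sum_add_distrib]
    exact Finset.sum_congr rfl fun k _ => by ring
  | mul_X p j hp =>
    have h0 := constantCoeff_localize p v e₁ e₂
    rw [localize_mul, pderiv_mul, map_add, map_mul, map_mul, hp, h0]
    have hX : localize (X j) v e₁ e₂ = C (v j) + C (e₁ j) * X 0 + C (e₂ j) * X 1 := by
      simp [localize]
    rw [hX]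
    fin_cases i <;> fin_cases j <;>
      simp [pderiv_X, Fin.sum_univ_three, Pi.single_apply] <;> ring

theorem one_le_order_localize {F : MvPolynomial (Fin 3) ℂ} {v : Fin 3 → ℂ} (e₁ e₂ : Fin 3 → ℂ)
    (h : eval v F = 0) :
    1 ≤ (localize F v e₁ e₂ : MvPowerSeries (Fin 2) ℂ).order := by
  rw [MvPowerSeries.one_le_order_iff_constCoeff_eq_zero,
    ← MvPowerSeries.coeff_zero_eq_constantCoeff_apply, coeff_coe]
  exact (constantCoeff_localize F v e₁ e₂).trans h

theorem two_le_order_localize {F : MvPolynomial (Fin 3) ℂ} {v : Fin 3 → ℂ} (e₁ e₂ : Fin 3 → ℂ)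
    (h : eval v F = 0) (h' : ∀ k, eval v (pderiv k F) = 0) :
    2 ≤ (localize F v e₁ e₂ : MvPowerSeries (Fin 2) ℂ).order := by
  refine MvPowerSeries.nat_le_order (n := 2) fun m hm => ?_
  rw [coeff_coe]
  rcases Nat.lt_succ_iff_lt_or_eq.1 hm with hm | hm
  · have : m = 0 := by simpa [Finsupp.degree_eq_zero_iff] using hm
    subst this
    exact (constantCoeff_localize F v e₁ e₂).trans h
  · obtain ⟨i, rfl⟩ : ∃ i, m = Finsupp.single i 1 := by
      obtain ⟨i, hi⟩ : ∃ i, m i ≠ 0 := by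
        by_contra! h0
        simp [show m = 0 from Finsupp.ext h0] at hm
      have hle : Finsupp.single i 1 ≤ m := by
        simpa [Finsupp.single_le_iff] using Nat.one_le_iff_ne_zero.2 hi
      obtain ⟨m', rfl⟩ := exists_add_of_le hle
      rw [map_add, Finsupp.degree_single] at hm
      have : m' = 0 := (Finsupp.degree_eq_zero_iff _).1 (by omega)
      exact ⟨i, by rw [this, add_zero]⟩
    have := constantCoeff_pderiv_localize F v e₁ e₂ i
    simp only [h', zero_mul, Finset.sum_const_zero, constantCoeff_eq, coeff_pderiv] at this
    simpa using this

/-- A germ of multiplicity at least three is not a node: both partial derivatives lie in `𝔪²`, so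
`1` and `t₀` stay linearly independent in the Milnor algebra. -/
theorem milnor_ne_one {f : MvPolynomial (Fin 2) ℂ}
    (hf : 3 ≤ (f : MvPowerSeries (Fin 2) ℂ).order) : milnor f ≠ 1 := by
  intro h1
  have hd (i : Fin 2) : 2 ≤ ((pderiv i f : MvPolynomial _ _) : MvPowerSeries (Fin 2) ℂ).order := by
    refine MvPowerSeries.nat_le_order (n := 2) fun m hm => ?_
    rw [coeff_coe, coeff_pderiv, ← coeff_coe, MvPowerSeries.coeff_of_lt_order, zero_mul]
    refine lt_of_lt_of_le ?_ hf
    rw [map_add, Finsupp.degree_single]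
    exact_mod_cast Nat.succ_lt_succ hm
  set J := Ideal.span {(↑(pderiv 0 f) : MvPowerSeries (Fin 2) ℂ),
                  (↑(pderiv 1 f) : MvPowerSeries (Fin 2) ℂ)} with hJ
  have hJo : ∀ g ∈ J, 2 ≤ g.order := by
    intro g hg
    obtain ⟨a, b, rfl⟩ := Ideal.mem_span_pair.1 hg
    refine le_trans (le_min ?_ ?_) MvPowerSeries.min_order_le_add
    · exact ((hd 0).trans le_add_self).trans MvPowerSeries.le_order_mul
    · exact ((hd 1).trans le_add_self).trans MvPowerSeries.le_order_mul
  have hfin : Module.finrank ℂ (MvPowerSeries (Fin 2) ℂ ⧸ J) = 1 := h1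
  have : Module.Finite ℂ (MvPowerSeries (Fin 2) ℂ ⧸ J) :=
    Module.finite_of_finrank_pos (by omega)
  have hli : LinearIndependent ℂ
      ![Ideal.Quotient.mk J 1, Ideal.Quotient.mk J (MvPowerSeries.X 0)] := by
    rw [LinearIndependent.pair_iff]
    intro s t hst
    have hmem : MvPowerSeries.C s + MvPowerSeries.C t * MvPowerSeries.X 0 ∈ J := by
      rw [← Ideal.Quotient.eq_zero_iff_mem, ← hst, ← MvPowerSeries.smul_eq_C_mul,
        ← mul_one (MvPowerSeries.C s), ← MvPowerSeries.smul_eq_C_mul]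
      rfl
    have ho := hJo _ hmem
    have c0 := MvPowerSeries.coeff_of_lt_order (d := 0)
      (lt_of_lt_of_le (by simp) ho)
    have c1 := MvPowerSeries.coeff_of_lt_order (d := Finsupp.single 0 1)
      (lt_of_lt_of_le (by simp [Finsupp.degree_single]) ho)
    rw [map_add, MvPowerSeries.coeff_C_mul, MvPowerSeries.coeff_C] at c0 c1
    simp [MvPowerSeries.coeff_X, eq_comm (a := (0 : Fin 2 →₀ ℕ))] at c0 c1
    exact ⟨c0, c1⟩
  have := hli.fintype_card_le_finrank
  rw [hfin] at this
  simp at this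

/-! ### Homogeneity and real structure -/

/-- Factors of homogeneous polynomials are homogeneous, since order and total degree are both
additive. -/
theorem isHomogeneous_of_dvd {F Q : MvPolynomial (Fin 3) ℂ} {d : ℕ}
    (h : Q.IsHomogeneous d) (h0 : Q ≠ 0) (hdvd : F ∣ Q) : F.IsHomogeneous F.totalDegree := by
  obtain ⟨G, rfl⟩ := hdvd
  have hF := left_ne_zero_of_mul h0
  have hG := right_ne_zero_of_mul h0
  have htd : F.totalDegree + G.totalDegree = d := by
    rw [← totalDegree_mul_of_isDomain hF hG, h.totalDegree h0]
  have ho : (d : ℕ∞) ≤ (F : MvPowerSeries (Fin 3) ℂ).order + (G : MvPowerSeries (Fin 3) ℂ).order := by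
    rw [← MvPowerSeries.order_mul, ← coe_mul]
    refine MvPowerSeries.nat_le_order fun m hm => ?_
    rw [coeff_coe]
    exact h.coeff_eq_zero hm.ne
  have hle (H : MvPolynomial (Fin 3) ℂ) (m) (hm : coeff m H ≠ 0) :
      (H : MvPowerSeries (Fin 3) ℂ).order ≤ m.degree :=
    MvPowerSeries.order_le (by rwa [coeff_coe])
  have htd' (H : MvPolynomial (Fin 3) ℂ) (m) (hm : coeff m H ≠ 0) : m.degree ≤ H.totalDegree :=
    le_totalDegree (mem_support_iff.2 hm)
  obtain ⟨g, hg⟩ := ne_zero_iff.1 hG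
  intro m hm
  have h1 := ho.trans (add_le_add (hle F m hm) (hle G g hg))
  have h2 : d ≤ m.degree + g.degree := by exact_mod_cast h1
  have h3 := htd' F m hm
  have h4 := htd' G g hg
  change Finsupp.weight (fun _ => 1) m = _
  rw [← Finsupp.degree_eq_weight_one]
  lia

theorem eval_smul_of_isHomogeneous {K : Type*} [Field K] {F : MvPolynomial (Fin 3) K} {n : ℕ}
    (h : F.IsHomogeneous n) (a : K) (v : Fin 3 → K) : eval (a • v) F = a ^ n * eval v F := by
  rw [eval_eq, eval_eq, Finset.mul_sum]
  refine Finset.sum_congr rfl fun m hm => ?_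
  simp only [Pi.smul_apply, smul_eq_mul, mul_pow, Finset.prod_mul_distrib,
    Finset.prod_pow_eq_pow_sum]
  rw [h.degree_eq_sum_deg_support hm]
  ring

theorem eval_ofReal_cx (R : MvPolynomial (Fin 3) ℝ) (v : Fin 3 → ℝ) :
    eval (fun i => (v i : ℂ)) (cx R) = (eval v R : ℂ) := by
  induction R using MvPolynomial.induction_on with
  | C a => simp [cx]
  | add p q hp hq => simp_all [cx]
  | mul_X p i hp => simp_all [cx]

theorem eval_ofReal_conj (F : MvPolynomial (Fin 3) ℂ) (v : Fin 3 → ℝ) :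
    eval (fun i => (v i : ℂ)) (F.map (starRingEnd ℂ)) =
      starRingEnd ℂ (eval (fun i => (v i : ℂ)) F) := by
  induction F using MvPolynomial.induction_on with
  | C a => simp
  | add p q hp hq => simp_all
  | mul_X p i hp => simp_all

theorem conj_cx (R : MvPolynomial (Fin 3) ℝ) : (cx R).map (starRingEnd ℂ) = cx R := by
  rw [cx, map_map]
  congr 2
  exact RingHom.ext Complex.conj_ofReal

/-- Real and imaginary part of a polynomial, taken coefficientwise. -/
theorem exists_re_im (F : MvPolynomial (Fin 3) ℂ) :
    ∃ A B : MvPolynomial (Fin 3) ℝ, F = cx A + C Complex.I * cx B := by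
  induction F using MvPolynomial.induction_on with
  | C a =>
    refine ⟨C a.re, C a.im, ?_⟩
    simp only [cx, map_C, ← C_mul, ← C_add]
    congr 1
    simp [mul_comm Complex.I, Complex.re_add_im]
  | add p q hp hq =>
    obtain ⟨A, B, rfl⟩ := hp
    obtain ⟨A', B', rfl⟩ := hq
    exact ⟨A + A', B + B', by simp only [cx, map_add]; ring⟩
  | mul_X p i hp =>
    obtain ⟨A, B, rfl⟩ := hp
    exact ⟨A * X i, B * X i, by simp only [cx, map_mul, map_X]; ring⟩

/-- A complex polynomial that is proportional to its conjugate is proportional to a real one,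
namely to its real or its imaginary part. -/
theorem exists_real_of_associated_conj {F : MvPolynomial (Fin 3) ℂ}
    (h : Associated F (F.map (starRingEnd ℂ))) : ∃ R, Associated (cx R) F := by
  obtain ⟨u, hu⟩ := h
  obtain ⟨c, hc⟩ : ∃ c, (u : MvPolynomial (Fin 3) ℂ) = C c := by
    obtain ⟨c, -, hc⟩ := isUnit_iff_eq_C_of_isReduced.1 u.isUnit
    exact ⟨c, hc⟩
  obtain ⟨A, B, hAB⟩ := exists_re_im F
  have hconj : F.map (starRingEnd ℂ) = cx A - C Complex.I * cx B := by
    rw [hAB]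
    simp [conj_cx, sub_eq_add_neg]
  have hII : (C Complex.I * C Complex.I : MvPolynomial (Fin 3) ℂ) = -1 := by
    rw [← C_mul]; simp
  rw [hc, hconj] at hu
  have hA : cx A = F * C ((1 + c) / 2) := by
    have h2 : (C (2:ℂ) : MvPolynomial (Fin 3) ℂ) * cx A = C 2 * (F * C ((1 + c) / 2)) := by
      rw [mul_left_comm, ← C_mul, mul_div_cancel₀ _ two_ne_zero, C_add, mul_add, hu, C_1, mul_one]
      nth_rw 1 [hAB]
      rw [show (2 : ℂ) = 1 + 1 by norm_num, C_add, C_1]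
      ring
    exact mul_left_cancel₀ (by simp) h2
  by_cases h0 : 1 + c = 0
  · refine ⟨B, ?_⟩
    have hA0 : cx A = 0 := by rw [hA, h0]; simp
    rw [hA0, zero_add] at hAB
    rw [hAB]
    exact associated_unit_mul_right _ _ ((isUnit_iff_ne_zero.2 Complex.I_ne_zero).map C)
  · refine ⟨A, ?_⟩
    rw [hA]
    exact associated_mul_unit_left _ _
      ((isUnit_iff_ne_zero.2 (div_ne_zero h0 two_ne_zero)).map C)

/-! ### Smooth real branches carry nearby real points -/

theorem hasDerivAt_eval_line (R : MvPolynomial (Fin 3) ℝ) (v w : Fin 3 → ℝ) :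
    HasDerivAt (fun t : ℝ => eval (v + t • w) R) (∑ k, eval v (pderiv k R) * w k) 0 := by
  induction R using MvPolynomial.induction_on with
  | C a => simpa using hasDerivAt_const (0 : ℝ) a
  | add p q hp hq =>
    refine ((hp.add hq).congr_deriv ?_).congr_of_eventuallyEq (.of_forall fun t => ?_)
    · simp [add_mul, Finset.sum_add_distrib]
    · simp
  | mul_X p i hp =>
    have hX : HasDerivAt (fun t : ℝ => v i + t * w i) (w i) 0 := by
      simpa using ((hasDerivAt_id (0 : ℝ)).mul_const (w i)).const_add (v i)
    refine ((hp.mul hX).congr_deriv ?_).congr_of_eventuallyEq (.of_forall fun t => ?_)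
    · fin_cases i <;> simp [pderiv_X, Fin.sum_univ_three, Pi.single_apply] <;> ring
    · simp

/-- Near a smooth real zero `v` of `R` there are real zeros off the line through `v`: `R` changes
sign along the gradient direction, hence also along every nearby parallel segment. -/
theorem exists_zero_near {R : MvPolynomial (Fin 3) ℝ} {v : Fin 3 → ℝ} (h0 : eval v R = 0)
    (hd : ∃ k, eval v (pderiv k R) ≠ 0) {W : Set (Fin 3 → ℝ)} (hW : W ∈ 𝓝 v) :
    ∃ x ∈ W, eval x R = 0 ∧ ∀ a : ℝ, x ≠ a • v := by
  set w : Fin 3 → ℝ := fun k => eval v (pderiv k R) with hw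
  have hpos : 0 < ∑ k, eval v (pderiv k R) * w k := by
    obtain ⟨k, hk⟩ := hd
    exact Finset.sum_pos' (fun i _ => mul_self_nonneg _) ⟨k, Finset.mem_univ _, mul_self_pos.2 hk⟩
  -- a direction outside the plane spanned by `v` and `w`
  obtain ⟨u, hu⟩ : ∃ u, u ∉ Submodule.span ℝ {v, w} := by
    by_contra! hall
    have htop : Submodule.span ℝ {v, w} = ⊤ := Submodule.eq_top_iff'.2 hall
    have hle := finrank_span_finset_le_card (R := ℝ) ({v, w} : Finset (Fin 3 → ℝ))
    rw [Finset.coe_pair, Set.finrank, htop, finrank_top, Module.finrank_fin_fun] at hle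
    have := Finset.card_le_two (a := v) (b := w)
    omega
  have hcont : Continuous fun p : ℝ × ℝ => v + p.1 • w + p.2 • u := by fun_prop
  have hR : Continuous fun x : Fin 3 → ℝ => eval x R := continuous_eval R
  have hW' : ∀ᶠ p : ℝ × ℝ in 𝓝 (0, 0), v + p.1 • w + p.2 • u ∈ W :=
    hcont.continuousAt.eventually (by simpa using hW)
  obtain ⟨δ, hδ, hball⟩ := Metric.eventually_nhds_iff.1 hW'
  have hslope := (hasDerivAt_iff_tendsto_slope.1 (hasDerivAt_eval_line R v w)).eventually
    (lt_mem_nhds hpos)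
  obtain ⟨η, hη, hsl⟩ := Metric.eventually_nhds_iff.1 (eventually_nhdsWithin_iff.1 hslope)
  -- `t` is small enough for the segment to stay in `W` and for `R` to have opposite signs at its ends
  set t := min δ η / 2 with ht
  have ht0 : 0 < t := by positivity
  have htδ : t < δ := by have := min_le_left δ η; linarith
  have htη : t < η := by have := min_le_right δ η; linarith
  have hp : 0 < eval (v + t • w) R := by
    have := hsl (y := t) (by simpa [abs_of_pos ht0] using htη) (by simpa using ht0.ne')
    simp only [slope_def_field, sub_zero, zero_smul, add_zero, h0] at this
    exact (div_pos_iff_of_pos_right ht0).1 this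
  have hn : eval (v + (-t) • w) R < 0 := by
    have := hsl (y := -t) (by simpa [abs_of_pos ht0] using htη) (by simpa using ht0.ne')
    simp only [slope_def_field, sub_zero, zero_smul, add_zero, h0] at this
    simpa [ht0.le, ht0, div_neg, neg_pos, div_neg_iff, ht0.not_gt] using this
  have hp' : ∀ᶠ s : ℝ in 𝓝 0, 0 < eval (v + t • w + s • u) R := by
    have : Continuous fun s : ℝ => eval (v + t • w + s • u) R := by fun_prop
    exact this.continuousAt.eventually (lt_mem_nhds (by simpa using hp))
  have hn' : ∀ᶠ s : ℝ in 𝓝 0, eval (v + (-t) • w + s • u) R < 0 := by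
    have : Continuous fun s : ℝ => eval (v + (-t) • w + s • u) R := by fun_prop
    exact this.continuousAt.eventually (gt_mem_nhds (by simpa using hn))
  obtain ⟨s, ⟨⟨hsp, hsn⟩, hsδ⟩, hs0⟩ : ∃ s : ℝ, ((0 < eval (v + t • w + s • u) R ∧
      eval (v + (-t) • w + s • u) R < 0) ∧ |s| < δ) ∧ s ≠ 0 := by
    have h3 : ∀ᶠ s : ℝ in 𝓝 0, |s| < δ := by
      filter_upwards [Metric.ball_mem_nhds (0 : ℝ) hδ] with s hs
      simpa using hs
    exact ((((hp'.and hn').and h3).filter_mono nhdsWithin_le_nhds).and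
      (self_mem_nhdsWithin : {0}ᶜ ∈ 𝓝[≠] (0 : ℝ))).exists
  have hg : Continuous fun τ : ℝ => eval (v + τ • w + s • u) R := by fun_prop
  obtain ⟨τ, hτ, hz⟩ := intermediate_value_Icc (a := -t) (b := t) (by linarith) hg.continuousOn
    ⟨hsn.le, hsp.le⟩
  refine ⟨v + τ • w + s • u, ?_, hz, ?_⟩
  · refine hball (y := (τ, s)) ?_
    rw [Prod.dist_eq, max_lt_iff]
    simp only [Real.dist_eq, sub_zero]
    exact ⟨(abs_le.2 hτ).trans_lt htδ, hsδ⟩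
  · intro a ha
    refine hu (Submodule.mem_span_pair.2 ⟨s⁻¹ * (a - 1), -(s⁻¹ * τ), ?_⟩)
    -- solve `v + τ w + s u = a v` for `u`, which would then lie in the span of `v` and `w`
    have : s • u = (a - 1) • v - τ • w := by
      rw [sub_smul, ← ha, one_smul]; abel
    calc _ = s⁻¹ • ((a - 1) • v - τ • w) := by module
      _ = u := by rw [← this, smul_smul, inv_mul_cancel₀ hs0, one_smul]

/-- An isolated point of the real locus lies on no smooth real branch. -/
theorem grad_eq_zero_of_isolated {P : MvPolynomial (Fin 3) ℝ} {d : ℕ} (hd : P.IsHomogeneous d)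
    {z : RP2} (hiso : IsIsolatedRealPoint (zeroSet P) z) {R : MvPolynomial (Fin 3) ℝ}
    (hRP : cx R ∣ cx P) (h0 : eval z.rep R = 0) (k : Fin 3) : eval z.rep (pderiv k R) = 0 := by
  by_contra hk
  obtain ⟨-, U, hU, hSU⟩ := hiso
  have hmk : Continuous fun v : {v : Fin 3 → ℝ // v ≠ 0} => (Projectivization.mk ℝ v.1 v.2 : RP2) :=
    continuous_quotient_mk'
  have hpre : {v : {v : Fin 3 → ℝ // v ≠ 0} | (Projectivization.mk ℝ v.1 v.2 : RP2) ∈ U} ∈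
      𝓝 (⟨z.rep, z.rep_nonzero⟩ : {v : Fin 3 → ℝ // v ≠ 0}) := by
    refine hmk.continuousAt ?_
    simpa using hU
  obtain ⟨W, hW, hWU⟩ := mem_nhds_subtype _ _ _ |>.1 hpre
  obtain ⟨x, hxW, hx0, hxz⟩ := exists_zero_near h0 ⟨k, hk⟩ hW
  have hxne : x ≠ 0 := by simpa using hxz 0
  have hPx : eval x P = 0 := by
    obtain ⟨Q, hQ⟩ := hRP
    have := congrArg (eval fun i => (x i : ℂ)) hQ
    rw [map_mul, eval_ofReal_cx, eval_ofReal_cx, hx0] at this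
    simpa using this
  have hmem : (Projectivization.mk ℝ x hxne : RP2) ∈ zeroSet P ∩ U := by
    refine ⟨?_, hWU (a := ⟨x, hxne⟩) hxW⟩
    obtain ⟨a, ha⟩ := Projectivization.exists_smul_eq_mk_rep ℝ x hxne
    change eval (Projectivization.mk ℝ x hxne).rep P = 0
    rw [← ha, Units.smul_def, eval_smul_of_isHomogeneous hd, hPx, mul_zero]
  rw [hSU, Set.mem_singleton_iff, ← z.mk_rep, Projectivization.mk_eq_mk_iff'] at hmem
  obtain ⟨a, ha⟩ := hmem
  exact hxz a ha.symm

/-! ### Components through the node -/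

/-- At a node the localized equation has multiplicity at most two. -/
theorem order_le_two {P : MvPolynomial (Fin 3) ℝ} {z : RP2} (h : IsRealNode P z) :
    ∃ e₁ e₂ : Fin 3 → ℂ,
      ¬ 3 ≤ (localize (cx P) (toC z).rep e₁ e₂ : MvPowerSeries (Fin 2) ℂ).order := by
  obtain ⟨-, e₁, e₂, -, h1⟩ := h
  exact ⟨e₁, e₂, fun h3 => milnor_ne_one h3 h1⟩

/-- No three factors of the complexified equation pass through the node. -/
theorem not_dvd_three {P : MvPolynomial (Fin 3) ℝ} {z : RP2} (h : IsRealNode P z)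
    {F G H : MvPolynomial (Fin 3) ℂ} (hdvd : F * G * H ∣ cx P)
    (hF : eval (toC z).rep F = 0) (hG : eval (toC z).rep G = 0) (hH : eval (toC z).rep H = 0) :
    False := by
  obtain ⟨e₁, e₂, h3⟩ := order_le_two h
  obtain ⟨Q, hQ⟩ := hdvd
  apply h3
  rw [hQ, localize_mul, localize_mul, localize_mul, coe_mul, coe_mul, coe_mul,
    MvPowerSeries.order_mul, MvPowerSeries.order_mul, MvPowerSeries.order_mul]
  calc (3 : ℕ∞) = 1 + 1 + 1 + 0 := by norm_num
    _ ≤ _ := add_le_add (add_le_add (add_le_add (one_le_order_localize e₁ e₂ hF)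
      (one_le_order_localize e₁ e₂ hG)) (one_le_order_localize e₁ e₂ hH)) zero_le

/-- If two factors pass through the node, the first is smooth there. -/
theorem not_dvd_of_singular {P : MvPolynomial (Fin 3) ℝ} {z : RP2} (h : IsRealNode P z)
    {F G : MvPolynomial (Fin 3) ℂ} (hdvd : F * G ∣ cx P)
    (hF : eval (toC z).rep F = 0) (hF' : ∀ k, eval (toC z).rep (pderiv k F) = 0)
    (hG : eval (toC z).rep G = 0) : False := by
  obtain ⟨e₁, e₂, h3⟩ := order_le_two h
  obtain ⟨Q, hQ⟩ := hdvd
  apply h3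
  rw [hQ, localize_mul, localize_mul, coe_mul, coe_mul,
    MvPowerSeries.order_mul, MvPowerSeries.order_mul]
  calc (3 : ℕ∞) = 2 + 1 + 0 := by norm_num
    _ ≤ _ := add_le_add (add_le_add (two_le_order_localize e₁ e₂ hF hF')
      (one_le_order_localize e₁ e₂ hG)) zero_le

/-- The chosen representative of `toC z` need not be real; it is a complex multiple of a real one. -/
theorem exists_rep_toC (z : RP2) :
    ∃ a : ℂ, a ≠ 0 ∧ (toC z).rep = a • fun i => (z.rep i : ℂ) := by
  obtain ⟨a, ha⟩ := Projectivization.exists_smul_eq_mk_rep ℂ (fun i => (z.rep i : ℂ)) (by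
    intro h
    apply z.rep_nonzero
    funext i
    simpa using congrFun h i)
  exact ⟨a, a.ne_zero, ha.symm⟩

theorem eval_toC_rep_eq_zero_iff {F : MvPolynomial (Fin 3) ℂ} {n : ℕ} (hF : F.IsHomogeneous n)
    (z : RP2) : eval (toC z).rep F = 0 ↔ eval (fun i => (z.rep i : ℂ)) F = 0 := by
  obtain ⟨a, ha, hz⟩ := exists_rep_toC z
  rw [hz, eval_smul_of_isHomogeneous hF]
  simp [ha]

/-- No component through the isolated node is real: a real branch would be smooth there, because a
second component passes through the node as well, and so would carry nearby real points. -/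
theorem not_real_component {P : MvPolynomial (Fin 3) ℝ} {d : ℕ} (hd : P.IsHomogeneous d)
    (hP : cx P ≠ 0) {z : RP2} (hnode : IsRealNode P z) (hiso : IsIsolatedRealPoint (zeroSet P) z)
    {R : MvPolynomial (Fin 3) ℝ} {F : MvPolynomial (Fin 3) ℂ} (hdvd : cx R * F ∣ cx P)
    (hR : eval (toC z).rep (cx R) = 0) (hF : eval (toC z).rep F = 0) : False := by
  have hRP : cx R ∣ cx P := (dvd_mul_right _ _).trans hdvd
  have hh : (cx R).IsHomogeneous (cx R).totalDegree :=
    isHomogeneous_of_dvd (hd.map _) hP hRP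
  have hR0 : eval z.rep R = 0 := by
    rw [eval_toC_rep_eq_zero_iff hh, eval_ofReal_cx] at hR
    exact_mod_cast hR
  refine not_dvd_of_singular hnode hdvd hR (fun k => ?_) hF
  rw [eval_toC_rep_eq_zero_iff hh.pderiv, cx, pderiv_map]
  change eval _ (cx _) = 0
  rw [eval_ofReal_cx, grad_eq_zero_of_isolated hd hiso hRP hR0 k, Complex.ofReal_zero]

theorem irreducible_conj {F : MvPolynomial (Fin 3) ℂ} (hF : Irreducible F) :
    Irreducible (F.map (starRingEnd ℂ)) :=
  (MulEquiv.irreducible_iff (mapEquiv (Fin 3) (starRingAut (R := ℂ)))).2 hF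

theorem isRelPrime_of_not_associated {F G : MvPolynomial (Fin 3) ℂ} (hF : Irreducible F)
    (hG : Irreducible G) (h : ¬ Associated F G) : IsRelPrime F G :=
  hF.isRelPrime_iff_not_dvd.2 fun hd => h (hF.associated_of_dvd hG hd)

end IsolatedNode

open IsolatedNode

/-- Let `D = {P = 0}` be a reduced real plane curve with a real node `z` that is
an isolated point of the real point set of `D`.  If the two local branches of
`D` at `z` belong to two distinct irreducible components `D₁ = {F₁ = 0}` and
`D₂ = {F₂ = 0}` of the complexification of `D` (i.e. `F₁`, `F₂` are
non-associated irreducible factors of the complexified polynomial, both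
vanishing at `z`), then `D₂` is the complex conjugate of `D₁`; in particular,
`z` cannot be an isolated node lying at the intersection of two distinct real
components (no component through `z` is defined by a real polynomial). -/
theorem isolated_node_on_two_components_conjugate
    (P : MvPolynomial (Fin 3) ℝ) (d : ℕ) (hd : P.IsHomogeneous d)
    (hred : Squarefree P)
    (z : RP2) (hnode : IsRealNode P z)
    (hiso : IsIsolatedRealPoint (zeroSet P) z)
    (F₁ F₂ : MvPolynomial (Fin 3) ℂ)
    (h1 : Irreducible F₁) (h2 : Irreducible F₂)
    (hdvd1 : F₁ ∣ cx P) (hdvd2 : F₂ ∣ cx P)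
    (hne : ¬ Associated F₁ F₂)
    (hz1 : eval (toC z).rep F₁ = 0) (hz2 : eval (toC z).rep F₂ = 0) :
    Associated F₂ (F₁.map (starRingEnd ℂ)) ∧
    ¬ ∃ R : MvPolynomial (Fin 3) ℝ, Associated (cx R) F₁ := by
  have hcx0 : cx P ≠ 0 := by
    rw [cx, Ne, map_eq_zero_iff _ (map_injective _ (algebraMap ℝ ℂ).injective)]
    exact hred.ne_zero
  have h12 : F₁ * F₂ ∣ cx P :=
    (isRelPrime_of_not_associated h1 h2 hne).mul_dvd hdvd1 hdvd2
  have hnoreal : ¬ ∃ R : MvPolynomial (Fin 3) ℝ, Associated (cx R) F₁ := by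
    rintro ⟨R, hR⟩
    refine not_real_component hd hcx0 hnode hiso ((mul_dvd_mul_right hR.dvd F₂).trans h12) ?_ hz2
    obtain ⟨Q, hQ⟩ := hR.symm.dvd
    rw [hQ, map_mul, hz1, zero_mul]
  refine ⟨?_, hnoreal⟩
  by_contra hne2
  set G := F₁.map (starRingEnd ℂ) with hG
  have hGirr : Irreducible G := irreducible_conj h1
  have hne1 : ¬ Associated F₁ G := fun h => hnoreal (exists_real_of_associated_conj h)
  have hdvdG : G ∣ cx P := by
    rw [← conj_cx]
    exact map_dvd _ hdvd1
  have hzG : eval (toC z).rep G = 0 := by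
    have hh : F₁.IsHomogeneous F₁.totalDegree :=
      isHomogeneous_of_dvd (hd.map _) hcx0 hdvd1
    rw [eval_toC_rep_eq_zero_iff (hh.map _), eval_ofReal_conj,
      (eval_toC_rep_eq_zero_iff hh z).1 hz1, map_zero]
  have hdvd3 : F₁ * F₂ * G ∣ cx P :=
    ((isRelPrime_of_not_associated h1 hGirr hne1).mul_left
      (isRelPrime_of_not_associated h2 hGirr hne2)).mul_dvd h12 hdvdG
  exact not_dvd_three hnode hdvd3 hz1 hz2 hzG
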